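/- For all permutations σ ∈ S_p and τ ∈ S_q, the maps ψ preserve the over and under operations: ψ_{p+q}(σ/τ) = ψ_p(σ)/ψ_q(τ) and ψ_{p+q}(σ\τ) = ψ_p(σ)\ψ_q(τ). -/

import Mathlib

/-! Symmetric groups `Sₙ` are modelled as `Equiv.Perm (Fin n)` (with `0`-indexed letters, so
the letter `i ∈ {1, …, n}` of the paper corresponds to `i - 1 : Fin n`), with the group law
`σ · τ = σ * τ` given by composition: `(σ * τ) x = σ (τ x)`. -/

/-- `s` is a Coxeter generator `sᵢ`, i.e. the transposition of two consecutive letters. -/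
def IsAdjacentTransposition {n : ℕ} (s : Equiv.Perm (Fin n)) : Prop :=
  ∃ (i : ℕ) (h : i + 1 < n), s = Equiv.swap ⟨i, by omega⟩ ⟨i + 1, h⟩

/-- The length `l(σ)`: the least `k` such that `σ` is a product of `k` Coxeter
generators `sᵢ`. -/
noncomputable def permLength {n : ℕ} (σ : Equiv.Perm (Fin n)) : ℕ :=
  sInf {k | ∃ L : List (Equiv.Perm (Fin n)),
    L.length = k ∧ (∀ s ∈ L, IsAdjacentTransposition s) ∧ L.prod = σ}

/-- The weak Bruhat order on `Sₙ`: `ω ≤ σ` iff there is `τ` with `σ = τ · ω` and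
`l(σ) = l(τ) + l(ω)`. -/
def weakLe {n : ℕ} (ω σ : Equiv.Perm (Fin n)) : Prop :=
  ∃ τ : Equiv.Perm (Fin n), σ = τ * ω ∧ permLength σ = permLength τ + permLength ω

/-- The strict weak Bruhat order. -/
def weakLt {n : ℕ} (ω σ : Equiv.Perm (Fin n)) : Prop :=
  weakLe ω σ ∧ ω ≠ σ

/-- `σ × τ`: the image of `(σ, τ)` under the canonical embedding
`S_p × S_q ↪ S_{p+q}`, where `σ` permutes the first `p` letters and `τ` the last `q`. -/
def blockSum {p q : ℕ} (σ : Equiv.Perm (Fin p)) (τ : Equiv.Perm (Fin q)) :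
    Equiv.Perm (Fin (p + q)) :=
  finSumFinEquiv.symm.trans ((Equiv.sumCongr σ τ).trans finSumFinEquiv)

/-- `ξ` is a `(p,q)`-shuffle: `ξ(1) < … < ξ(p)` and `ξ(p+1) < … < ξ(p+q)`. -/
def IsShuffle (p q : ℕ) (ξ : Equiv.Perm (Fin (p + q))) : Prop :=
  (∀ i j : Fin (p + q), (i : ℕ) < (j : ℕ) → (j : ℕ) < p → ξ i < ξ j) ∧
  (∀ i j : Fin (p + q), p ≤ (i : ℕ) → (i : ℕ) < (j : ℕ) → ξ i < ξ j)

/-- `ξ_{p,q} ∈ S_{p+q}`: the permutation with one-line notation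
`(q+1, q+2, …, q+p, 1, 2, …, q)`. -/
def xi (p q : ℕ) : Equiv.Perm (Fin (p + q)) :=
  finSumFinEquiv.symm.trans ((Equiv.sumComm (Fin p) (Fin q)).trans
    (finSumFinEquiv.trans (finCongr (Nat.add_comm q p))))

/-- Transport of a permutation along an equality of the number of letters. -/
def permCast {m n : ℕ} (h : m = n) (π : Equiv.Perm (Fin m)) : Equiv.Perm (Fin n) :=
  (finCongr h).permCongr π

/-- The grafting `σ ∨ τ ∈ S_{p+q+1}` of `σ ∈ S_p` and `τ ∈ S_q`: in 1-indexed one-line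
notation, `(σ∨τ)(i) = σ(i)` for `1 ≤ i ≤ p`, `(σ∨τ)(p+1) = p+q+1`, and
`(σ∨τ)(i) = τ(i-p-1) + p` for `p+2 ≤ i ≤ p+q+1`.  (Equivalently,
`σ ∨ τ = (σ × τ × 1₁) · s_{p+q} · s_{p+q-1} · ⋯ · s_{p+1}`.) -/
def graft {p q : ℕ} (σ : Equiv.Perm (Fin p)) (τ : Equiv.Perm (Fin q)) :
    Equiv.Perm (Fin (p + q + 1)) :=
  blockSum (blockSum σ τ) (1 : Equiv.Perm (Fin 1)) *
    permCast (by omega) (blockSum (1 : Equiv.Perm (Fin p)) (finRotate (q + 1))⁻¹)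

/-- The `over` operation on permutations: `σ / τ := σ × τ`. -/
def overP {p q : ℕ} (σ : Equiv.Perm (Fin p)) (τ : Equiv.Perm (Fin q)) :
    Equiv.Perm (Fin (p + q)) :=
  blockSum σ τ

/-- The `under` operation on permutations: `σ \ τ := ξ_{p,q} · (σ × τ)`. -/
def underP {p q : ℕ} (σ : Equiv.Perm (Fin p)) (τ : Equiv.Perm (Fin q)) :
    Equiv.Perm (Fin (p + q)) :=
  xi p q * blockSum σ τ

/-- Planar binary trees: `leaf` is the tree `|` (no interior vertex) and
`node l r = l ∨ r` is the grafting of `l` and `r` (their roots are joined to a new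
vertex, which becomes the root). -/
inductive PBTree : Type
  | leaf : PBTree
  | node : PBTree → PBTree → PBTree
deriving DecidableEq

/-- The number of interior vertices of a planar binary tree: `t ∈ Yₙ` iff `t.size = n`. -/
def PBTree.size : PBTree → ℕ
  | .leaf => 0
  | .node l r => l.size + r.size + 1

/-- The weak order on planar binary trees, generated transitively by
(a) `u ≤ u' → v ≤ v' → u∨v ≤ u'∨v'` and (b) `(u∨v)∨w ≤ u∨(v∨w)`. -/
inductive TreeLe : PBTree → PBTree → Prop
  | refl (t : PBTree) : TreeLe t t
  | graft {u u' v v' : PBTree} : TreeLe u u' → TreeLe v v' →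
      TreeLe (.node u v) (.node u' v')
  | rotate (u v w : PBTree) : TreeLe (.node (.node u v) w) (.node u (.node v w))
  | trans {a b c : PBTree} : TreeLe a b → TreeLe b c → TreeLe a c

/-- The `over` operation on trees: `u / v` is obtained by identifying the root of `u`
with the leftmost leaf of `v`; recursively `u / | = u` and `u / (vˡ∨vʳ) = (u/vˡ) ∨ vʳ`. -/
def treeOver : PBTree → PBTree → PBTree
  | u, .leaf => u
  | u, .node vl vr => .node (treeOver u vl) vr

/-- The `under` operation on trees: `u \ v` is obtained by identifying the rightmost leaf
of `u` with the root of `v`; recursively `| \ v = v` and `(uˡ∨uʳ) \ v = uˡ ∨ (uʳ\v)`. -/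
def treeUnder : PBTree → PBTree → PBTree
  | .leaf, v => v
  | .node ul ur, v => .node ul (treeUnder ur v)

/-- The graph of the map `ψₙ : Sₙ → Yₙ`: `PsiRel σ t` holds iff `ψ(σ) = t`.
The map `ψ` sends `σ ∈ Sₙ` with `σ(i) = n` to `ψ(σˡ) ∨ ψ(σʳ)`, where
`σˡ ∈ S_{i-1}`, `σʳ ∈ S_{n-i}` are the order-preserving relabelings of the subwords of
the one-line notation of `σ` to the left and to the right of the letter `n`; equivalently
(Proposition 1.8 of the paper), `σ = (γ × 1₁) · (σˡ ∨ σʳ)` for a (unique)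
`(i-1, n-i)`-shuffle `γ`. -/
inductive PsiRel : {n : ℕ} → Equiv.Perm (Fin n) → PBTree → Prop
  | leaf (σ : Equiv.Perm (Fin 0)) : PsiRel σ .leaf
  | node {a b : ℕ} {γ : Equiv.Perm (Fin (a + b))} {σl : Equiv.Perm (Fin a)}
      {σr : Equiv.Perm (Fin b)} {tl tr : PBTree} :
      IsShuffle a b γ → PsiRel σl tl → PsiRel σr tr →
      PsiRel (blockSum γ (1 : Equiv.Perm (Fin 1)) * graft σl σr) (.node tl tr)

/-- Extension of a permutation of `Fin n` to `ℕ` by the identity. -/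
def pE {n : ℕ} (σ : Equiv.Perm (Fin n)) (i : ℕ) : ℕ :=
  if h : i < n then (σ ⟨i, h⟩ : ℕ) else i

theorem pE_val {n : ℕ} (σ : Equiv.Perm (Fin n)) (i : Fin n) : pE σ i = σ i := by
  simp [pE]

theorem pE_ge {n : ℕ} (σ : Equiv.Perm (Fin n)) {i : ℕ} (h : n ≤ i) : pE σ i = i := by
  simp [pE, Nat.not_lt.2 h]

theorem pE_lt {n : ℕ} (σ : Equiv.Perm (Fin n)) {i : ℕ} (h : i < n) : pE σ i < n := by
  simp [pE, h]

theorem pE_ext {n : ℕ} {σ τ : Equiv.Perm (Fin n)} (h : ∀ i < n, pE σ i = pE τ i) : σ = τ := by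
  ext i
  rw [← pE_val, ← pE_val, h i i.2]

theorem pE_mul {n : ℕ} (σ τ : Equiv.Perm (Fin n)) (i : ℕ) : pE (σ * τ) i = pE σ (pE τ i) := by
  by_cases h : i < n
  · simp [pE, h]
  · simp [pE, h]

theorem pE_one {n : ℕ} (i : ℕ) : pE (1 : Equiv.Perm (Fin n)) i = i := by
  by_cases h : i < n <;> simp [pE, h]

theorem pE_cast {m n : ℕ} (h : m = n) (σ : Equiv.Perm (Fin m)) (i : ℕ) :
    pE (permCast h σ) i = pE σ i := by
  subst h
  rfl

theorem pE_blockSum {p q : ℕ} (σ : Equiv.Perm (Fin p)) (τ : Equiv.Perm (Fin q)) (i : ℕ) :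
    pE (blockSum σ τ) i = if i < p then pE σ i else p + pE τ (i - p) := by
  by_cases h : i < p
  · have e : (⟨i, by omega⟩ : Fin (p + q)) = Fin.castAdd q ⟨i, h⟩ := rfl
    have h2 : i < p + q := by omega
    simp only [pE, h, h2, dif_pos, if_true, e, blockSum, Equiv.trans_apply,
      finSumFinEquiv_symm_apply_castAdd]
    simp
  · by_cases h2 : i < p + q
    · have e : (⟨i, h2⟩ : Fin (p + q)) = Fin.natAdd p ⟨i - p, by omega⟩ := by
        ext; simp; omega
      have h3 : i - p < q := by omega
      simp only [pE, h, h2, h3, dif_pos, if_false, e, blockSum, Equiv.trans_apply,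
        finSumFinEquiv_symm_apply_natAdd]
      simp
    · rw [pE_ge _ (by omega), if_neg h, pE_ge τ (by omega)]; omega

theorem pE_xi (p q : ℕ) (i : ℕ) :
    pE (xi p q) i = if i < p then q + i else if i < p + q then i - p else i := by
  by_cases h : i < p
  · have e : (⟨i, by omega⟩ : Fin (p + q)) = Fin.castAdd q ⟨i, h⟩ := rfl
    have h2 : i < p + q := by omega
    simp only [pE, h, h2, dif_pos, if_true, e, xi, Equiv.trans_apply,
      finSumFinEquiv_symm_apply_castAdd]
    simp
  · by_cases h2 : i < p + q
    · have e : (⟨i, h2⟩ : Fin (p + q)) = Fin.natAdd p ⟨i - p, by omega⟩ := by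
        ext; simp; omega
      simp only [pE, h, h2, dif_pos, if_false, if_true, e, xi, Equiv.trans_apply,
        finSumFinEquiv_symm_apply_natAdd]
      simp
    · rw [pE_ge _ (by omega), if_neg h, if_neg h2]

theorem pE_inv {n : ℕ} (σ : Equiv.Perm (Fin n)) {i j : ℕ} (h : pE σ j = i) :
    pE σ⁻¹ i = j := by
  rw [← h, ← pE_mul, inv_mul_cancel, pE_one]

theorem pE_rot (q : ℕ) (i : ℕ) :
    pE (finRotate (q + 1)) i = if i < q then i + 1 else if i = q then 0 else i := by
  by_cases h : i < q
  · have h2 : i < q + 1 := by omega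
    simp only [pE, h, h2, dif_pos, if_true]
    rw [finRotate_of_lt h]
  · by_cases h2 : i = q
    · subst h2
      simp only [pE, Nat.lt_succ_self, dif_pos, lt_irrefl, if_false, if_true]
      have := finRotate_last (n := i)
      rw [show (⟨i, Nat.lt_succ_self i⟩ : Fin (i + 1)) = Fin.last i from rfl, this]
      rfl
    · rw [pE_ge _ (by omega), if_neg h, if_neg h2]

theorem pE_rot_inv (q : ℕ) (i : ℕ) :
    pE (finRotate (q + 1))⁻¹ i = if i = 0 then q else if i < q + 1 then i - 1 else i := by
  apply pE_inv
  rw [pE_rot]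
  split_ifs <;> omega

theorem pE_xi_inv (p q : ℕ) (i : ℕ) :
    pE (xi p q)⁻¹ i = if i < q then p + i else if i < p + q then i - q else i := by
  apply pE_inv
  rw [pE_xi]
  split_ifs <;> omega

theorem pE_graft {p q : ℕ} (σ : Equiv.Perm (Fin p)) (τ : Equiv.Perm (Fin q)) (i : ℕ) :
    pE (graft σ τ) i = if i < p then pE σ i else if i = p then p + q else
      if i < p + q + 1 then p + pE τ (i - p - 1) else i := by
  rw [graft, pE_mul, pE_cast, pE_blockSum 1, pE_one, pE_rot_inv]
  by_cases h : i < p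
  · simp only [h, if_true, pE_blockSum]
    rw [if_pos (by omega)]
  by_cases h2 : i = p
  · subst h2
    simp [pE_blockSum, pE_one]
  by_cases h3 : i < p + q + 1
  · rw [if_neg h, if_neg (by omega), if_pos (by omega), if_neg h, if_neg h2, if_pos h3]
    rw [pE_blockSum, if_pos (by omega), pE_blockSum, if_neg (by omega)]
    congr 2; omega
  · rw [if_neg h, if_neg (by omega), if_neg (by omega), if_neg h, if_neg h2, if_neg h3]
    rw [pE_ge _ (by omega)]; omega

theorem isShuffle_iff (p q : ℕ) (ξ : Equiv.Perm (Fin (p + q))) :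
    IsShuffle p q ξ ↔ (∀ i j, i < j → j < p → pE ξ i < pE ξ j) ∧
      (∀ i j, p ≤ i → i < j → j < p + q → pE ξ i < pE ξ j) := by
  constructor
  · rintro ⟨h1, h2⟩
    constructor
    · intro i j hij hj
      have := h1 ⟨i, by omega⟩ ⟨j, by omega⟩ hij hj
      rw [Fin.lt_def, ← pE_val, ← pE_val] at this
      exact this
    · intro i j hi hij hj
      have := h2 ⟨i, by omega⟩ ⟨j, by omega⟩ hi hij
      rw [Fin.lt_def, ← pE_val, ← pE_val] at this
      exact this
  · rintro ⟨h1, h2⟩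
    constructor
    · intro i j hij hj
      rw [Fin.lt_def, ← pE_val, ← pE_val]
      exact h1 _ _ hij hj
    · intro i j hi hij
      rw [Fin.lt_def, ← pE_val, ← pE_val]
      exact h2 _ _ hi hij j.2

theorem psi_congr {m n : ℕ} (h : m = n) {σ : Equiv.Perm (Fin m)} {τ : Equiv.Perm (Fin n)}
    {t : PBTree} (ht : PsiRel σ t) (he : ∀ i < n, pE τ i = pE σ i) : PsiRel τ t := by
  subst h
  rwa [pE_ext he]

theorem psi_node {n a b : ℕ} (h : n = a + b + 1) {π : Equiv.Perm (Fin n)}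
    {γ : Equiv.Perm (Fin (a + b))} {σl : Equiv.Perm (Fin a)}
    {σr : Equiv.Perm (Fin b)} {tl tr : PBTree}
    (hg : IsShuffle a b γ) (hl : PsiRel σl tl) (hr : PsiRel σr tr)
    (h1 : ∀ i < a, pE π i = pE γ (pE σl i)) (h2 : pE π a = a + b)
    (h3 : ∀ j < b, pE π (a + 1 + j) = pE γ (a + pE σr j)) : PsiRel π (.node tl tr) := by
  refine psi_congr h.symm (PsiRel.node hg hl hr) ?_
  intro i hi
  rw [pE_mul, pE_graft]
  by_cases hia : i < a
  · have := pE_lt σl hia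
    rw [if_pos hia, pE_blockSum, if_pos (by omega), h1 i hia]
  by_cases hia2 : i = a
  · subst hia2
    simp [pE_blockSum, pE_one, h2]
  · have := pE_lt σr (i := i - a - 1) (by omega)
    rw [if_neg hia, if_neg hia2, if_pos (by omega), pE_blockSum, if_pos (by omega),
      ← h3 _ (by omega)]
    congr 1; omega

theorem node_vals {a b : ℕ} (γ : Equiv.Perm (Fin (a + b))) (σl : Equiv.Perm (Fin a))
    (σr : Equiv.Perm (Fin b)) (π : Equiv.Perm (Fin (a + b + 1)))
    (hπ : π = blockSum γ (1 : Equiv.Perm (Fin 1)) * graft σl σr) :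
    (∀ i < a, pE π i = pE γ (pE σl i)) ∧ (pE π a = a + b) ∧
    (∀ j < b, pE π (a + 1 + j) = pE γ (a + pE σr j)) := by
  subst hπ
  refine ⟨fun i hi => ?_, ?_, fun j hj => ?_⟩
  · have := pE_lt σl hi
    rw [pE_mul, pE_graft, if_pos hi, pE_blockSum, if_pos (by omega)]
  · simp [pE_mul, pE_graft, pE_blockSum, pE_one]
  · have := pE_lt σr hj
    rw [pE_mul, pE_graft, if_neg (by omega), if_neg (by omega), if_pos (by omega), pE_blockSum]
    have e : a + 1 + j - a - 1 = j := by omega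
    rw [e, if_pos (by omega)]

theorem psi_over {p q : ℕ} {σ : Equiv.Perm (Fin p)} {τ : Equiv.Perm (Fin q)}
    {t w : PBTree} (ht : PsiRel σ t) (hw : PsiRel τ w) :
    PsiRel (overP σ τ) (treeOver t w) := by
  induction hw with
  | leaf τ =>
    rw [treeOver]
    refine psi_congr (by omega) ht fun i hi => ?_
    rw [overP, pE_blockSum, if_pos (by omega)]
  | @node a b γ σl σr tl tr hg hl hr ihl ihr =>
    obtain ⟨v1, v2, v3⟩ := node_vals γ σl σr _ rfl
    generalize blockSum γ (1 : Equiv.Perm (Fin 1)) * graft σl σr = π at *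
    rw [treeOver]
    rw [isShuffle_iff] at hg
    have eg : ∀ i, pE (permCast (Nat.add_assoc p a b).symm (blockSum (1 : Equiv.Perm (Fin p)) γ)) i
        = if i < p then i else p + pE γ (i - p) := by
      intro i
      rw [pE_cast, pE_blockSum, pE_one]
    refine psi_node (γ := permCast (Nat.add_assoc p a b).symm (blockSum 1 γ)) (by omega) ?_ ihl hr
      ?_ ?_ ?_
    · rw [isShuffle_iff]
      constructor
      · intro i j hij hj
        rw [eg, eg]
        have := hg.1 (i - p) (j - p)
        split_ifs <;> omega
      · intro i j hi hij hj
        rw [eg, eg]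
        have := hg.2 (i - p) (j - p)
        split_ifs <;> omega
    · intro i hi
      rw [eg, overP, overP, pE_blockSum, pE_blockSum]
      by_cases h : i < p
      · have := pE_lt σ h
        simp [h, this]
      · rw [if_neg h, if_neg h, v1 _ (by omega), if_neg (by omega)]
        congr 2; omega
    · rw [overP, pE_blockSum, if_neg (by omega)]
      have e : p + a - p = a := by omega
      rw [e, v2]; omega
    · intro j hj
      rw [eg, overP, pE_blockSum, if_neg (by omega), if_neg (by omega)]
      have e : p + a + 1 + j - p = a + 1 + j := by omega
      rw [e, v3 _ hj]
      congr 2; omega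

theorem pE_under {p q : ℕ} (σ : Equiv.Perm (Fin p)) (τ : Equiv.Perm (Fin q)) (i : ℕ)
    (hi : i < p + q) :
    pE (underP σ τ) i = if i < p then q + pE σ i else pE τ (i - p) := by
  rw [underP, pE_mul, pE_blockSum]
  by_cases h : i < p
  · have := pE_lt σ h
    rw [if_pos h, if_pos h, pE_xi, if_pos this]
  · have := pE_lt τ (i := i - p) (by omega)
    rw [if_neg h, if_neg h, pE_xi, if_neg (by omega), if_pos (by omega)]
    omega

theorem psi_under {p q : ℕ} {σ : Equiv.Perm (Fin p)} {τ : Equiv.Perm (Fin q)}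
    {t w : PBTree} (ht : PsiRel σ t) (hw : PsiRel τ w) :
    PsiRel (underP σ τ) (treeUnder t w) := by
  induction ht with
  | leaf σ =>
    rw [treeUnder]
    refine psi_congr (by omega) hw fun i hi => ?_
    rw [pE_under _ _ _ hi, if_neg (by omega)]
    rfl
  | @node a b γ σl σr tl tr hg hl hr ihl ihr =>
    obtain ⟨v1, v2, v3⟩ := node_vals γ σl σr _ rfl
    generalize blockSum γ (1 : Equiv.Perm (Fin 1)) * graft σl σr = π at *
    rw [treeUnder]
    rw [isShuffle_iff] at hg
    obtain ⟨g, eg⟩ : ∃ g : Equiv.Perm (Fin (a + (b + q))), ∀ i < a + (b + q),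
        pE g i = if i < a then q + pE γ i else if i < a + q then i - a else q + pE γ (i - q) := by
      refine ⟨permCast (Nat.add_assoc a b q) (underP γ (1 : Equiv.Perm (Fin q))) *
        blockSum 1 (xi b q)⁻¹, fun i hi => ?_⟩
      rw [pE_mul, pE_cast, pE_blockSum, pE_one, pE_xi_inv]
      by_cases h : i < a
      · rw [if_pos h, if_pos h, pE_under _ _ _ (by omega), if_pos (by omega)]
      by_cases h2 : i < a + q
      · rw [if_neg h, if_neg h, if_pos h2, if_pos (by omega), pE_under _ _ _ (by omega),
          if_neg (by omega), pE_one]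
        omega
      · rw [if_neg h, if_neg h, if_neg h2, if_neg (by omega), if_pos (by omega),
          pE_under _ _ _ (by omega), if_pos (by omega)]
        congr 2; omega
    refine psi_node (γ := g) (by omega) ?_ hl ihr ?_ ?_ ?_
    · rw [isShuffle_iff]
      constructor
      · intro i j hij hj
        rw [eg _ (by omega), eg _ (by omega), if_pos (by omega), if_pos (by omega)]
        have := hg.1 i j hij hj
        omega
      · intro i j hi hij hj
        rw [eg _ (by omega), eg _ (by omega)]
        have := hg.2 (i - q) (j - q)
        split_ifs <;> omega
    · intro i hi
      have := pE_lt σl hi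
      rw [eg _ (by omega), pE_under _ _ _ (by omega), if_pos (by omega), if_pos (by omega), v1 _ hi]
    · rw [pE_under _ _ _ (by omega), if_pos (by omega), v2]
      omega
    · intro j hj
      have hu := pE_lt (underP σr τ) hj
      rw [eg _ (by omega), pE_under _ _ _ (by omega), pE_under _ _ _ hj]
      by_cases h : j < b
      · have := pE_lt σr h
        rw [if_pos (by omega), if_pos h, if_neg (by omega), if_neg (by omega), v3 _ h]
        congr 2; omega
      · have := pE_lt τ (i := j - b) (by omega)
        rw [if_neg (by omega), if_neg h, if_neg (by omega), if_pos (by omega)]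
        have e : a + 1 + j - (a + b + 1) = j - b := by omega
        rw [e]; omega

/-- Theorem 2.9: for all `σ ∈ S_p`, `τ ∈ S_q`, the maps `ψ` preserve
the `over` and `under` operations: `ψ_{p+q}(σ/τ) = ψ_p(σ)/ψ_q(τ)` and
`ψ_{p+q}(σ\τ) = ψ_p(σ)\ψ_q(τ)`. -/
theorem stmt14 (p q : ℕ) (σ : Equiv.Perm (Fin p)) (τ : Equiv.Perm (Fin q))
    (t w : PBTree) (ht : PsiRel σ t) (hw : PsiRel τ w) :
    PsiRel (overP σ τ) (treeOver t w) ∧ PsiRel (underP σ τ) (treeUnder t w) := by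
  exact ⟨psi_over ht hw, psi_under ht hw⟩
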